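/- Let x ∈ B_n satisfy: x ∈ SSS(x), inf(x^i) = i·inf(x) and sup(x^i) = i·sup(x) for all i ≥ 1. If x^N is cyclically weighted for some N ≥ 1, then x itself is cyclically weighted. -/

import Mathlib

/-! Basic definitions for the braid group `B_n`, its Garside structure,
and related notions, following Garside/El-Rifai–Morton.
Generators are indexed by `i : Fin (n-1)`, with `σ i` corresponding to the
Artin generator `σ_{i+1}` (1-based) of the paper. -/

/-- The braid relations, as a set of elements of the free group. -/
def braidRels (n : ℕ) : Set (FreeGroup (Fin (n - 1))) :=
  { r | (∃ i j : Fin (n - 1), (i : ℕ) + 1 < (j : ℕ) ∧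
          r = .of i * .of j * (.of i)⁻¹ * (.of j)⁻¹) ∨
        (∃ i j : Fin (n - 1), (i : ℕ) + 1 = (j : ℕ) ∧
          r = (.of i * .of j * .of i) * (.of j * .of i * .of j)⁻¹) }

/-- The braid group on `n` strands. -/
abbrev BraidGroup (n : ℕ) := PresentedGroup (braidRels n)

namespace BraidGroup

variable {n : ℕ}

/-- The Artin generator `σ_{i+1}` (`i` is a 0-based index). -/
def σ (i : Fin (n - 1)) : BraidGroup n := PresentedGroup.of i

/-- `σ'` with a natural-number 0-based index (junk value `1` out of range). -/
def σ' (n : ℕ) (i : ℕ) : BraidGroup n := if h : i < n - 1 then σ ⟨i, h⟩ else 1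

/-- The fundamental braid `Δ = (σ_1⋯σ_{n-1})(σ_1⋯σ_{n-2})⋯(σ_1σ_2)σ_1`. -/
def Δ (n : ℕ) : BraidGroup n :=
  (((List.range (n - 1)).reverse).map
    (fun j => ((List.range (j + 1)).map (σ' n)).prod)).prod

/-- The monoid of positive braids inside `B_n` (the image of `B_n^+`). -/
def positives (n : ℕ) : Submonoid (BraidGroup n) :=
  Submonoid.closure (Set.range (σ (n := n)))

/-- `x` is a positive braid. -/
def IsPositive (x : BraidGroup n) : Prop := x ∈ positives n

/-- The prefix (left-divisibility) order: `x ≼ y` iff `x⁻¹y` is positive. -/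
def LeftDvd (x y : BraidGroup n) : Prop := ∃ p, IsPositive p ∧ x * p = y

/-- The right-divisibility order: `x ≼_R y` iff `y x⁻¹` is positive. -/
def RightDvd (x y : BraidGroup n) : Prop := ∃ p, IsPositive p ∧ p * x = y

/-- Permutation braids: positive left divisors of `Δ`. -/
def IsPermBraid (x : BraidGroup n) : Prop := IsPositive x ∧ LeftDvd x (Δ n)

/-- The involution `τ` of `B_n`, determined by `τ(σ_i) = σ_{n-i}`
(on 0-based indices: `i ↦ (n-2) - i`, i.e. `Fin.rev`). -/
noncomputable def τ (n : ℕ) : BraidGroup n →* BraidGroup n :=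
  Classical.epsilon (fun f => ∀ i : Fin (n - 1), f (σ i) = σ i.rev)

/-- `τ^u` for an integer `u`: equals `τ` for odd `u` and the identity for even `u`
(`τ` is an involution). -/
noncomputable def τpow (u : ℤ) (x : BraidGroup n) : BraidGroup n :=
  if Even u then x else τ n x

/-- The product `a⬝b` of a permutation braid `a` and a positive braid `b` is left
weighted iff `a* ∧ b = e`, i.e. no generator left-divides both `a* = a⁻¹Δ` and `b`. -/
def IsLeftWeighted (a b : BraidGroup n) : Prop :=
  ∀ i : Fin (n - 1), ¬ (LeftDvd (σ i) (a⁻¹ * Δ n) ∧ LeftDvd (σ i) b)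

/-- `Δ^u x_1 ⋯ x_k` is the left weighted form of `x`, where `L = [x_1, …, x_k]`. -/
def IsWeightedForm (u : ℤ) (L : List (BraidGroup n)) (x : BraidGroup n) : Prop :=
  (∀ a ∈ L, IsPermBraid a ∧ a ≠ 1 ∧ a ≠ Δ n) ∧
  L.Chain' IsLeftWeighted ∧
  x = (Δ n) ^ u * L.prod

/-- The left weighted form of a braid (chosen by choice; it exists and is unique). -/
noncomputable def wf (x : BraidGroup n) : ℤ × List (BraidGroup n) :=
  Classical.epsilon (fun p => IsWeightedForm p.1 p.2 x)

/-- The infimum `inf(x)`. -/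
noncomputable def binf (x : BraidGroup n) : ℤ := (wf x).1

/-- The canonical length `ℓ(x)`. -/
noncomputable def blen (x : BraidGroup n) : ℕ := (wf x).2.length

/-- The supremum `sup(x) = inf(x) + ℓ(x)`. -/
noncomputable def bsup (x : BraidGroup n) : ℤ := binf x + blen x

/-- The head `H(x)`: the first factor of the weighted form. -/
noncomputable def bhead (x : BraidGroup n) : BraidGroup n := ((wf x).2.head?).getD 1

/-- The tail `T(x)`: the last factor of the weighted form. -/
noncomputable def btail (x : BraidGroup n) : BraidGroup n := ((wf x).2.getLast?).getD 1

/-- Cycling: `c(x) = τ^u(H(x))⁻¹ · x · τ^u(H(x))`. -/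
noncomputable def cyc (x : BraidGroup n) : BraidGroup n :=
  (τpow (binf x) (bhead x))⁻¹ * x * τpow (binf x) (bhead x)

/-- Decycling: `d(x) = T(x) · x · T(x)⁻¹`. -/
noncomputable def decyc (x : BraidGroup n) : BraidGroup n :=
  btail x * x * (btail x)⁻¹

/-- `x` is cyclically weighted: `x_k ⬝ τ^u(x_1)` is left weighted. -/
noncomputable def IsCW (x : BraidGroup n) : Prop :=
  IsLeftWeighted (btail x) (τpow (binf x) (bhead x))

/-- `x` is weakly cyclically weighted: `H(x·τ^u(H(x))) = H(x)`. -/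
noncomputable def IsWCW (x : BraidGroup n) : Prop :=
  bhead (x * τpow (binf x) (bhead x)) = bhead x

/-- The summit set of `x`: conjugates with maximal infimum. -/
def SS (x : BraidGroup n) : Set (BraidGroup n) :=
  { y | IsConj x y ∧ ∀ z, IsConj x z → binf z ≤ binf y }

/-- The super summit set of `x`: conjugates with maximal infimum and minimal supremum. -/
def SSS (x : BraidGroup n) : Set (BraidGroup n) :=
  { y | y ∈ SS x ∧ ∀ z, IsConj x z → bsup y ≤ bsup z }

/-- The ultra summit set of `x`. -/
def USS (x : BraidGroup n) : Set (BraidGroup n) :=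
  { y ∈ SSS x | ∃ M : ℕ, 0 < M ∧ cyc^[M] y = y }

/-- The reduced super summit set of `x`. -/
def RSSS (x : BraidGroup n) : Set (BraidGroup n) :=
  { y | IsConj x y ∧ (∃ M : ℕ, 0 < M ∧ cyc^[M] y = y) ∧
        (∃ N : ℕ, 0 < N ∧ decyc^[N] y = y) }

/-- The left meet (greatest common left divisor) of two braids. -/
noncomputable def leftMeet (a b : BraidGroup n) : BraidGroup n :=
  Classical.epsilon (fun m => IsPositive m ∧ LeftDvd m a ∧ LeftDvd m b ∧
    ∀ c, IsPositive c → LeftDvd c a → LeftDvd c b → LeftDvd c m)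

/-- `x` is periodic: some positive power of `x` is a power of `Δ²`. -/
def IsPeriodic (x : BraidGroup n) : Prop :=
  ∃ m : ℕ, 0 < m ∧ ∃ k : ℤ, x ^ m = (Δ n) ^ (2 * k)

/-- The free generator `x_{i+1}` of `π₁` of the `n`-punctured disk (0-based index;
junk value `1` out of range). -/
def freeGen (n : ℕ) (i : ℕ) : FreeGroup (Fin n) := if h : i < n then .of ⟨i, h⟩ else 1

/-- The Artin action of `B_n` on the free group `F_n`:
`σ_i` sends `x_i ↦ x_i x_{i+1} x_i⁻¹`, `x_{i+1} ↦ x_i`, fixing the other generators. -/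
noncomputable def artin (n : ℕ) : BraidGroup n →* Monoid.End (FreeGroup (Fin n)) :=
  Classical.epsilon (fun f => ∀ i : Fin (n - 1),
    f (σ i) = FreeGroup.lift (fun j : Fin n =>
      if (j : ℕ) = (i : ℕ) then freeGen n i * freeGen n (i + 1) * (freeGen n i)⁻¹
      else if (j : ℕ) = (i : ℕ) + 1 then freeGen n i
      else FreeGroup.of j))

/-- The element of `π₁` represented by the round curve enclosing punctures
`I.1 + 1, …, I.2` (1-based): the product `x_{I.1+1} ⋯ x_{I.2}`. -/
def curveWord (n : ℕ) (I : ℕ × ℕ) : FreeGroup (Fin n) :=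
  ((List.range (I.2 - I.1)).map (fun t => freeGen n (I.1 + t))).prod

/-- An essential round curve: it encloses at least `2` and at most `n-1` punctures. -/
def EssentialCurve (n : ℕ) (I : ℕ × ℕ) : Prop :=
  I.1 + 2 ≤ I.2 ∧ I.2 ≤ n ∧ I.2 - I.1 ≤ n - 1

/-- Two round curves are disjoint (as curves): the intervals are disjoint or nested. -/
def CurvesCompatible (I J : ℕ × ℕ) : Prop :=
  I.2 ≤ J.1 ∨ J.2 ≤ I.1 ∨ (I.1 ≤ J.1 ∧ J.2 ≤ I.2) ∨ (J.1 ≤ I.1 ∧ I.2 ≤ J.2)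

/-- `x` is reducible: some conjugate of `x` preserves, up to conjugacy in `π₁`
(i.e. up to isotopy) and orientation, a nonempty system of disjoint essential
round curves. -/
noncomputable def IsReducible (x : BraidGroup n) : Prop :=
  ∃ y, IsConj x y ∧ ∃ F : Finset (ℕ × ℕ), F.Nonempty ∧
    (∀ I ∈ F, EssentialCurve n I) ∧
    (∀ I ∈ F, ∀ J ∈ F, I ≠ J → CurvesCompatible I J) ∧
    (∀ I ∈ F, ∃ J ∈ F, ∃ g : FreeGroup (Fin n),
      artin n y (curveWord n I) = g * curveWord n J * g⁻¹ ∨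
      artin n y (curveWord n I) = g * (curveWord n J)⁻¹ * g⁻¹)

/-- `x` is pseudo-Anosov: neither periodic nor reducible (Nielsen–Thurston). -/
noncomputable def IsPseudoAnosov (x : BraidGroup n) : Prop :=
  ¬ IsPeriodic x ∧ ¬ IsReducible x

/-- `σ_i` (1-based index `i`) left-divides the positive braid `w`, i.e. `i` is
 a descent of `w`. -/
def HasDescent (n : ℕ) (i : ℕ) (w : BraidGroup n) : Prop := LeftDvd (σ' n (i - 1)) w

/-- `D(n,k,i)`: the probability that a product of `k` independent uniformly random
permutation braids begins with the descent `i` (1-based), computed by counting. -/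
noncomputable def descentProb (n k : ℕ) (i : ℕ) : ℝ :=
  ({ f : Fin k → BraidGroup n | (∀ j, IsPermBraid (f j)) ∧
      HasDescent n i (List.ofFn f).prod }.ncard : ℝ) / (n.factorial ^ k : ℝ)

/-- `D(n,k)`: the expected number of descents of a product of `k` random
permutation braids. -/
noncomputable def descentExp (n k : ℕ) : ℝ :=
  ∑ i ∈ Finset.Icc 1 (n - 1), descentProb n k i

/-- `d(n,k) = D(n,k) - D(n,k-1)`: the expected number of descents contributed by
the `k`-th factor. -/
noncomputable def descentInc (n k : ℕ) : ℝ := descentExp n k - descentExp n (k - 1)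

end BraidGroup

/-! The starting generators of a braid `x`, those which divide it on the left, are controlled by its
weighted form `Δ ^ u * x₁ ⋯ xₖ`: left weightedness says exactly that multiplying a permutation braid
on the right by the remaining factors creates no new starting generators. Hence `x * Δ ^ (-inf x)`
starts with the same generators as `τ ^ u (x₁)`. The complements of the factors in reverse order
form a left weighted sequence as well, so `x⁻¹ * Δ ^ (sup x)` starts with the same generators as the
complement of `xₖ`, and `x` is cyclically weighted if and only if the starting sets of these two
positive braids are disjoint. When `inf` and `sup` are multiplied by `N`, both positive braids are
left divisors of their analogues for `x ^ N`, so their starting sets are contained in those of the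
analogues, and disjointness descends from `x ^ N` to `x`.

Starting generators behave well because the positive braid monoid has conditional right lcms and
embeds into the braid group. For the Artin monoid of a triangle-free simply laced graph, Garside's
argument shows by induction on the length that two words `i X` and `j Y` represent the same element
only if both are right multiples of the lcm of `i` and `j`. This gives left cancellation and lcms of
generators, hence all conditional lcms. The square of the fundamental element is central and is a
multiple of every generator, so inverting it inverts the generators. -/

section Monoid

variable {M : Type*} [Monoid M]

lemma eq_one_or_eq_mul_of_mem_closure {s : Set M} {x : M} (hx : x ∈ Submonoid.closure s) :
    x = 1 ∨ ∃ a ∈ s, ∃ y ∈ Submonoid.closure s, x = a * y := by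
  induction hx using Submonoid.closure_induction_left with
  | one => exact .inl rfl
  | mul_left a ha y hy _ => exact .inr ⟨a, ha, y, hy, rfl⟩

/-- `l` is a least common right multiple of `a` and `b`: being left divisible by `l` is the same as
being left divisible by both (in a noncommutative monoid, `∣` is left divisibility). -/
def IsRightLcm (a b l : M) : Prop := ∀ q, l ∣ q ↔ a ∣ q ∧ b ∣ q

lemma isRightLcm_one_left (b : M) : IsRightLcm 1 b b := fun _ => by simp

lemma isRightLcm_one_right (a : M) : IsRightLcm a 1 a := fun _ => by simp

/-- `M` has conditional right lcms: any two elements of `M` with a common right multiple have a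
least one. -/
def HasRightLcms (M : Type*) [Monoid M] : Prop :=
  ∀ ⦃a b p : M⦄, a ∣ p → b ∣ p → ∃ l, IsRightLcm a b l

variable [IsLeftCancelMul M]

lemma mul_dvd_mul_left_iff {a x y : M} : a * x ∣ a * y ↔ x ∣ y := by
  refine ⟨?_, mul_dvd_mul_left a⟩
  rintro ⟨c, hc⟩
  exact ⟨c, mul_left_cancel (hc.trans (mul_assoc a x c))⟩

/-- The four hypotheses on lcms are the squares of a two-by-two grid with `s * a` and `t * b` along
its two outer sides. -/
lemma IsRightLcm.grid {s t a b c d e f g : M} (hst : IsRightLcm s t (s * c)) (hcd : s * c = t * d)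
    (hac : IsRightLcm a c (c * e)) (hbd : IsRightLcm b d (d * f)) (hef : IsRightLcm e f g) :
    IsRightLcm (s * a) (t * b) (s * c * g) := by
  intro q
  constructor
  · intro hq
    have hg := (hef g).1 dvd_rfl
    constructor
    · rw [mul_assoc] at hq
      exact (mul_dvd_mul_left s (((hac _).1 (mul_dvd_mul_left c hg.1)).1)).trans hq
    · rw [hcd, mul_assoc] at hq
      exact (mul_dvd_mul_left t (((hbd _).1 (mul_dvd_mul_left d hg.2)).1)).trans hq
  · rintro ⟨hsa, htb⟩
    obtain ⟨z, rfl⟩ := (hst q).2 ⟨dvd_of_mul_right_dvd hsa, dvd_of_mul_right_dvd htb⟩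
    have he : e ∣ z := by
      rw [mul_assoc, mul_dvd_mul_left_iff] at hsa
      exact mul_dvd_mul_left_iff.1 ((hac _).2 ⟨hsa, dvd_mul_right c z⟩)
    have hf : f ∣ z := by
      rw [hcd, mul_assoc, mul_dvd_mul_left_iff] at htb
      exact mul_dvd_mul_left_iff.1 ((hbd _).2 ⟨htb, dvd_mul_right d z⟩)
    exact mul_dvd_mul_left _ ((hef z).2 ⟨he, hf⟩)

lemma hasRightLcms_of_generators {S : Set M} (hS : Submonoid.closure S = ⊤) (ℓ : M → ℕ)
    (hℓ : ∀ x y, ℓ (x * y) = ℓ x + ℓ y) (hℓS : ∀ s ∈ S, 0 < ℓ s)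
    (hlcm : ∀ s ∈ S, ∀ t ∈ S, ∀ p : M, s ∣ p → t ∣ p → ∃ l, IsRightLcm s t l) :
    HasRightLcms M := by
  intro a b p
  induction hk : ℓ p using Nat.strong_induction_on generalizing a b p with
  | _ k ih =>
    intro ha hb
    rcases eq_one_or_eq_mul_of_mem_closure (show a ∈ Submonoid.closure S by simp [hS]) with
      rfl | ⟨s, hs, a, -, rfl⟩
    · exact ⟨b, isRightLcm_one_left b⟩
    rcases eq_one_or_eq_mul_of_mem_closure (show b ∈ Submonoid.closure S by simp [hS]) with
      rfl | ⟨t, ht, b, -, rfl⟩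
    · exact ⟨_, isRightLcm_one_right _⟩
    obtain ⟨l, hst⟩ := hlcm s hs t ht p (dvd_of_mul_right_dvd ha) (dvd_of_mul_right_dvd hb)
    obtain ⟨⟨c, rfl⟩, d, hcd⟩ := (hst l).1 dvd_rfl
    obtain ⟨z, rfl⟩ := (hst p).2 ⟨dvd_of_mul_right_dvd ha, dvd_of_mul_right_dvd hb⟩
    have hs_pos := hℓS s hs
    have ht_pos := hℓS t ht
    have hlen_s : ℓ (s * c * z) = ℓ s + (ℓ c + ℓ z) := by rw [mul_assoc, hℓ, hℓ]
    have hlen_t : ℓ (s * c * z) = ℓ t + (ℓ d + ℓ z) := by rw [hcd, mul_assoc, hℓ, hℓ]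
    have ha' : a ∣ c * z := by rwa [mul_assoc, mul_dvd_mul_left_iff] at ha
    have hb' : b ∣ d * z := by rwa [hcd, mul_assoc, mul_dvd_mul_left_iff] at hb
    obtain ⟨l₁, hac⟩ := ih (ℓ (c * z)) (by rw [hℓ]; omega) rfl ha' (dvd_mul_right c z)
    obtain ⟨e, rfl⟩ := ((hac l₁).1 dvd_rfl).2
    obtain ⟨l₂, hbd⟩ := ih (ℓ (d * z)) (by rw [hℓ]; omega) rfl hb' (dvd_mul_right d z)
    obtain ⟨f, rfl⟩ := ((hbd l₂).1 dvd_rfl).2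
    obtain ⟨g, hef⟩ := ih (ℓ z) (by omega) rfl
      (mul_dvd_mul_left_iff.1 ((hac _).2 ⟨ha', dvd_mul_right c z⟩))
      (mul_dvd_mul_left_iff.1 ((hbd _).2 ⟨hb', dvd_mul_right d z⟩))
    exact ⟨_, hst.grid hcd hac hbd hef⟩

/-- The lcm of `a` and `s` is `a * r` for some `r` dividing both `b` and `c`. -/
lemma HasRightLcms.dvd_left_of_dvd_mul (hM : HasRightLcms M) {s a b c : M}
    (hbc : ∀ r, r ∣ b → r ∣ c → IsUnit r) (hb : s ∣ a * b) (hc : s ∣ a * c) : s ∣ a := by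
  obtain ⟨l, hl⟩ := hM (dvd_mul_right a b) hb
  obtain ⟨⟨r, rfl⟩, hs⟩ := (hl l).1 dvd_rfl
  have hrb : r ∣ b := mul_dvd_mul_left_iff.1 ((hl _).2 ⟨dvd_mul_right a b, hb⟩)
  have hrc : r ∣ c := mul_dvd_mul_left_iff.1 ((hl _).2 ⟨dvd_mul_right a c, hc⟩)
  exact (hbc r hrb hrc).dvd_mul_right.1 hs

lemma commute_of_mul_mem_center {a b : M} (h : a * b ∈ Submonoid.center M) : Commute a b :=
  mul_left_cancel (a := a) ((Submonoid.mem_center_iff.1 h a).trans (mul_assoc a b a))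

end Monoid

open scoped OreLocalization in
/-- `N` is the Ore localisation at the powers of `z`. -/
lemma exists_injective_monoidHom_isUnit.{u} {M : Type u} [Monoid M] [IsLeftCancelMul M] {z : M}
    (hz : z ∈ Submonoid.center M) :
    ∃ (N : Type u) (_ : Monoid N) (f : M →* N), Function.Injective f ∧ IsUnit (f z) := by
  have hcentral (t : Submonoid.powers z) (r : M) : (t : M) * r = r * t := by
    have ht : Submonoid.powers z ≤ Submonoid.center M := Submonoid.powers_le.2 hz
    exact (Submonoid.mem_center_iff.1 (ht t.2) r).symm
  let _ : OreLocalization.OreSet (Submonoid.powers z) :=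
    { ore_right_cancel := fun r₁ r₂ t h => ⟨t, by rw [hcentral, hcentral, h]⟩
      oreNum := fun r _ => r
      oreDenom := fun _ t => t
      ore_eq := fun r t => hcentral t r }
  refine ⟨M[(Submonoid.powers z)⁻¹], inferInstance, OreLocalization.numeratorHom, ?_,
    OreLocalization.numerator_isUnit ⟨z, Submonoid.mem_powers z⟩⟩
  intro p q hpq
  obtain ⟨u, v, huv, hden⟩ := OreLocalization.oreDiv_eq_iff.1 hpq
  have hvu : v = u := by simpa using hden.symm
  subst hvu
  exact (mul_left_cancel huv).symm
/-- The defining relations of the simply laced Artin monoid of `Γ`: the generators at `i` and `j`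
commute when `i` and `j` are not adjacent, and satisfy the braid relation when they are. -/
inductive ArtinRel {V : Type*} (Γ : SimpleGraph V) : FreeMonoid V → FreeMonoid V → Prop
  | comm {i j : V} (h : ¬ Γ.Adj i j) : ArtinRel Γ (.of i * .of j) (.of j * .of i)
  | braid {i j : V} (h : Γ.Adj i j) :
      ArtinRel Γ (.of i * (.of j * .of i)) (.of j * (.of i * .of j))

/-- The simply laced Artin monoid with Coxeter graph `Γ`. -/
abbrev ArtinMonoid {V : Type*} (Γ : SimpleGraph V) := PresentedMonoid (ArtinRel Γ)

namespace ArtinMonoid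

variable {V : Type*} {Γ : SimpleGraph V} {i j k : V} {X Y Z : ArtinMonoid Γ} {L : ℕ}

/-- The generator of the Artin monoid at the vertex `i`. -/
def gen (i : V) : ArtinMonoid Γ := PresentedMonoid.of (ArtinRel Γ) i

lemma gen_comm (h : ¬ Γ.Adj i j) : (gen i * gen j : ArtinMonoid Γ) = gen j * gen i :=
  PresentedMonoid.mk_eq_mk_of_rel (.comm h)

lemma gen_braid (h : Γ.Adj i j) :
    (gen i * (gen j * gen i) : ArtinMonoid Γ) = gen j * (gen i * gen j) :=
  PresentedMonoid.mk_eq_mk_of_rel (.braid h)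

lemma gen_comm_assoc (h : ¬ Γ.Adj i j) (X : ArtinMonoid Γ) :
    gen i * (gen j * X) = gen j * (gen i * X) := by
  rw [← mul_assoc, gen_comm h, mul_assoc]

lemma gen_braid_assoc (h : Γ.Adj i j) (X : ArtinMonoid Γ) :
    gen i * (gen j * (gen i * X)) = gen j * (gen i * (gen j * X)) := by
  simpa only [mul_assoc] using congrArg (· * X) (gen_braid h)

lemma closure_range_gen : Submonoid.closure (Set.range (gen (Γ := Γ))) = ⊤ :=
  PresentedMonoid.closure_range_of _

lemma eq_one_or_exists_gen_dvd (X : ArtinMonoid Γ) :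
    X = 1 ∨ ∃ i, gen i ∣ X := by
  rcases eq_one_or_eq_mul_of_mem_closure (s := Set.range gen) (x := X)
    (by simp [closure_range_gen]) with h | ⟨_, ⟨i, rfl⟩, Y, -, rfl⟩
  · exact .inl h
  · exact .inr ⟨i, dvd_mul_right _ _⟩

/-- The universal property of the Artin monoid. -/
def lift {N : Type*} [Monoid N] (f : V → N) (hcomm : ∀ i j, ¬ Γ.Adj i j → f i * f j = f j * f i)
    (hbraid : ∀ i j, Γ.Adj i j → f i * (f j * f i) = f j * (f i * f j)) : ArtinMonoid Γ →* N :=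
  PresentedMonoid.lift f fun _ _ h => by
    cases h with
    | comm h => simpa using hcomm _ _ h
    | braid h => simpa using hbraid _ _ h

@[simp]
lemma lift_gen {N : Type*} [Monoid N] (f : V → N)
    (hcomm : ∀ i j, ¬ Γ.Adj i j → f i * f j = f j * f i)
    (hbraid : ∀ i j, Γ.Adj i j → f i * (f j * f i) = f j * (f i * f j)) (i : V) :
    lift f hcomm hbraid (gen i) = f i :=
  PresentedMonoid.lift_of _ _

/-- The length of an element of the Artin monoid, that is the common length of all the words
representing it. -/
def length (X : ArtinMonoid Γ) : ℕ :=
  Multiplicative.toAdd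
    (lift (fun _ => Multiplicative.ofAdd 1) (fun _ _ _ => rfl) (fun _ _ _ => rfl) X)

@[simp]
lemma length_mul (X Y : ArtinMonoid Γ) : length (X * Y) = length X + length Y := by
  simp [length]

@[simp]
lemma length_gen (i : V) : length (gen i : ArtinMonoid Γ) = 1 := by
  simp [length]

open Classical in
/-- The complement of the generator at `i` in the right lcm of the generators at `i` and `j`. -/
noncomputable def compl (i j : V) : ArtinMonoid Γ :=
  if i = j then 1 else if Γ.Adj i j then gen j * gen i else gen j

@[simp]
lemma compl_self (i : V) : (compl i i : ArtinMonoid Γ) = 1 := if_pos rfl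

lemma compl_of_adj (h : Γ.Adj i j) : (compl i j : ArtinMonoid Γ) = gen j * gen i := by
  rw [compl, if_neg h.ne, if_pos h]

lemma compl_of_not_adj (hij : i ≠ j) (h : ¬ Γ.Adj i j) : (compl i j : ArtinMonoid Γ) = gen j := by
  rw [compl, if_neg hij, if_neg h]

lemma gen_mul_compl (i j : V) : (gen i * compl i j : ArtinMonoid Γ) = gen j * compl j i := by
  rcases eq_or_ne i j with rfl | hij
  · rfl
  by_cases h : Γ.Adj i j
  · rw [compl_of_adj h, compl_of_adj h.symm, gen_braid h]
  · rw [compl_of_not_adj hij h, compl_of_not_adj hij.symm (mt Γ.adj_symm h), gen_comm h]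

lemma commute_gen_compl (hki : ¬ Γ.Adj k i) (hkj : ¬ Γ.Adj k j) :
    Commute (gen k) (compl i j : ArtinMonoid Γ) := by
  rw [compl]
  split_ifs
  · exact Commute.one_right _
  · exact Commute.mul_right (gen_comm hkj) (gen_comm hki)
  · exact gen_comm hkj

/-- The words `i X` and `j Y` represent the same element because both are a right multiple of the
lcm of the generators `i` and `j`, with the same quotient. -/
def Square (p q : V × ArtinMonoid Γ) : Prop :=
  ∃ Z, p.2 = compl p.1 q.1 * Z ∧ q.2 = compl q.1 p.1 * Z

lemma square_iff :
    Square (i, X) (j, Y) ↔ ∃ Z, X = compl i j * Z ∧ Y = compl j i * Z :=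
  Iff.rfl

instance : Std.Symm (Square (Γ := Γ)) where
  symm _ _ := fun ⟨Z, hp, hq⟩ => ⟨Z, hq, hp⟩

lemma Square.mul_right {p q : V × ArtinMonoid Γ} (h : Square p q) (U : ArtinMonoid Γ) :
    Square (p.1, p.2 * U) (q.1, q.2 * U) :=
  let ⟨Z, hp, hq⟩ := h
  ⟨Z * U, by rw [hp, mul_assoc], by rw [hq, mul_assoc]⟩

lemma Square.gen_mul_eq (h : Square (i, X) (j, Y)) : gen i * X = gen j * Y := by
  obtain ⟨Z, rfl, rfl⟩ := square_iff.1 h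
  simp only [← mul_assoc, gen_mul_compl]

lemma square_self_iff : Square (i, X) (i, Y) ↔ X = Y := by
  simp [square_iff, eq_comm]

lemma square_iff_of_adj (h : Γ.Adj i j) :
    Square (i, X) (j, Y) ↔ ∃ Z, X = gen j * (gen i * Z) ∧ Y = gen i * (gen j * Z) := by
  simp only [square_iff, compl_of_adj h, compl_of_adj h.symm, mul_assoc]

lemma square_iff_of_not_adj (hij : i ≠ j) (h : ¬ Γ.Adj i j) :
    Square (i, X) (j, Y) ↔ ∃ Z, X = gen j * Z ∧ Y = gen i * Z := by
  simp only [square_iff, compl_of_not_adj hij h, compl_of_not_adj hij.symm (mt Γ.adj_symm h)]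

lemma reflTransGen_square_of_rel {w w' : FreeMonoid V} (h : ConGen.Rel (ArtinRel Γ) w w') :
    (w = 1 ∧ w' = 1) ∨ ∃ i u j u', w = .of i * u ∧ w' = .of j * u' ∧
      Relation.ReflTransGen (Square (Γ := Γ)) (i, PresentedMonoid.mk _ u)
        (j, PresentedMonoid.mk _ u') := by
  induction h with
  | of w w' h =>
    refine .inr ?_
    cases h with
    | @comm i j h =>
      rcases eq_or_ne i j with rfl | hij
      · exact ⟨i, _, i, _, rfl, rfl, .refl⟩
      · refine ⟨i, _, j, _, rfl, rfl, .single ((square_iff_of_not_adj hij h).2 ⟨1, ?_⟩)⟩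
        exact ⟨(mul_one _).symm, (mul_one _).symm⟩
    | @braid i j h =>
      refine ⟨i, _, j, _, rfl, rfl, .single ((square_iff_of_adj h).2 ⟨1, ?_⟩)⟩
      simp only [mul_one]
      exact ⟨rfl, rfl⟩
  | refl w =>
    induction w using FreeMonoid.casesOn with
    | one => exact .inl ⟨rfl, rfl⟩
    | of_mul i u => exact .inr ⟨i, u, i, u, rfl, rfl, .refl⟩
  | symm _ ih =>
    rcases ih with ⟨rfl, rfl⟩ | ⟨i, u, j, u', rfl, rfl, hchain⟩
    · exact .inl ⟨rfl, rfl⟩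
    · exact .inr ⟨j, u', i, u, rfl, rfl, symm_of (Relation.ReflTransGen Square) hchain⟩
  | trans _ _ ih₁ ih₂ =>
    rcases ih₁ with ⟨rfl, rfl⟩ | ⟨i, u, k, v, rfl, rfl, hchain₁⟩
    · exact ih₂
    rcases ih₂ with ⟨hone, rfl⟩ | ⟨k', v', j, u', heq, rfl, hchain₂⟩
    · exact absurd (congrArg FreeMonoid.length hone) (by simp)
    obtain ⟨rfl, rfl⟩ : k = k' ∧ v = v' := by
      simpa using List.cons.inj heq
    exact .inr ⟨i, u, j, u', rfl, rfl, hchain₁.trans hchain₂⟩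
  | @mul w w' v v' _ hv ih₁ ih₂ =>
    rcases ih₁ with ⟨rfl, rfl⟩ | ⟨i, u, j, u', rfl, rfl, hchain⟩
    · simpa only [one_mul] using ih₂
    · refine .inr ⟨i, u * v, j, u' * v', mul_assoc _ _ _, mul_assoc _ _ _, ?_⟩
      rw [map_mul, map_mul, ← PresentedMonoid.mk_eq_mk_iff.2 hv]
      exact hchain.lift (fun p => (p.1, p.2 * PresentedMonoid.mk _ v)) fun _ _ h => h.mul_right _

lemma reflTransGen_square_of_gen_mul_eq (h : gen i * X = gen j * Y) :
    Relation.ReflTransGen (Square (Γ := Γ)) (i, X) (j, Y) := by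
  obtain ⟨u, rfl⟩ := PresentedMonoid.surjective_mk X
  obtain ⟨u', rfl⟩ := PresentedMonoid.surjective_mk Y
  have hrel : ConGen.Rel (ArtinRel Γ) (.of i * u) (.of j * u') := PresentedMonoid.mk_eq_mk_iff.1 h
  rcases reflTransGen_square_of_rel hrel with ⟨hone, -⟩ | ⟨i', v, j', v', hu, hu', hchain⟩
  · exact absurd (congrArg FreeMonoid.length hone) (by simp)
  obtain ⟨rfl, rfl⟩ : i = i' ∧ u = v := by simpa using List.cons.inj hu
  obtain ⟨rfl, rfl⟩ : j = j' ∧ u' = v' := by simpa using List.cons.inj hu'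
  exact hchain

/-- Every coincidence `i X = j Y` with `X` of length less than `L` comes from a single square. -/
def SquaresBelow (Γ : SimpleGraph V) (L : ℕ) : Prop :=
  ∀ ⦃i j : V⦄ ⦃X Y : ArtinMonoid Γ⦄, gen i * X = gen j * Y → length X < L → Square (i, X) (j, Y)

namespace SquaresBelow

variable (hL : SquaresBelow Γ L)
include hL

lemma cancel (h : gen i * X = gen i * Y) (hlen : length X < L) : X = Y :=
  square_self_iff.1 (hL h hlen)

lemma of_adj (hij : Γ.Adj i j) (h : gen i * X = gen j * Y) (hlen : length X < L) :
    ∃ Z, X = gen j * (gen i * Z) ∧ Y = gen i * (gen j * Z) :=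
  (square_iff_of_adj hij).1 (hL h hlen)

lemma of_not_adj (hne : i ≠ j) (hij : ¬ Γ.Adj i j) (h : gen i * X = gen j * Y)
    (hlen : length X < L) : ∃ Z, X = gen j * Z ∧ Y = gen i * Z :=
  (square_iff_of_not_adj hne hij).1 (hL h hlen)

lemma square_trans_self (h₁ : Square (i, X) (k, Y)) (h₂ : Square (k, Y) (i, Z))
    (hlen : length Y ≤ L) : Square (i, X) (i, Z) := by
  rw [square_self_iff]
  rcases eq_or_ne i k with rfl | hik
  · rw [square_self_iff] at h₁ h₂
    exact h₁.trans h₂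
  by_cases hadj : Γ.Adj i k
  · obtain ⟨A, rfl, rfl⟩ := (square_iff_of_adj hadj).1 h₁
    obtain ⟨B, hAB, rfl⟩ := (square_iff_of_adj hadj.symm).1 h₂
    simp only [length_mul, length_gen] at hlen
    rw [hL.cancel (hL.cancel hAB (by simp; omega)) (by omega)]
  · obtain ⟨A, rfl, rfl⟩ := (square_iff_of_not_adj hik hadj).1 h₁
    obtain ⟨B, hAB, rfl⟩ := (square_iff_of_not_adj hik.symm (mt Γ.adj_symm hadj)).1 h₂
    simp only [length_mul, length_gen] at hlen
    rw [hL.cancel hAB (by omega)]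

lemma square_trans_comm_comm (hki : ¬ Γ.Adj k i) (hkj : ¬ Γ.Adj k j) (hne_ki : k ≠ i)
    (hne_kj : k ≠ j) (h₁ : Square (i, X) (k, Y)) (h₂ : Square (k, Y) (j, Z))
    (hlen : length Y ≤ L) : Square (i, X) (j, Z) := by
  obtain ⟨A, rfl, rfl⟩ := (square_iff_of_not_adj hne_ki.symm (mt Γ.adj_symm hki)).1 h₁
  obtain ⟨B, hAB, rfl⟩ := (square_iff_of_not_adj hne_kj hkj).1 h₂
  rw [length_mul, length_gen] at hlen
  obtain ⟨W, rfl, rfl⟩ := square_iff.1 (hL hAB (by omega))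
  refine ⟨gen k * W, ?_, ?_⟩
  · rw [← mul_assoc, (commute_gen_compl hki hkj).eq, mul_assoc]
  · rw [← mul_assoc, (commute_gen_compl hkj hki).eq, mul_assoc]

lemma square_trans_braid_comm_of_not_adj (hki : Γ.Adj k i) (hkj : ¬ Γ.Adj k j)
    (hij : ¬ Γ.Adj i j) (hne_kj : k ≠ j) (hne_ij : i ≠ j) (h₁ : Square (i, X) (k, Y))
    (h₂ : Square (k, Y) (j, Z)) (hlen : length Y ≤ L) : Square (i, X) (j, Z) := by
  obtain ⟨A, rfl, rfl⟩ := (square_iff_of_adj hki.symm).1 h₁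
  obtain ⟨B, hAB, rfl⟩ := (square_iff_of_not_adj hne_kj hkj).1 h₂
  simp only [length_mul, length_gen] at hlen
  obtain ⟨U, hU, rfl⟩ := hL.of_not_adj hne_ij hij hAB (by simp; omega)
  obtain ⟨T, rfl, rfl⟩ := hL.of_not_adj hne_kj hkj hU (by omega)
  refine (square_iff_of_not_adj hne_ij hij).2 ⟨gen k * (gen i * T), ?_, ?_⟩
  · rw [gen_comm_assoc hij, gen_comm_assoc hkj]
  · rw [gen_braid_assoc hki]

lemma square_trans_braid_comm_of_adj (hki : Γ.Adj k i) (hkj : ¬ Γ.Adj k j)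
    (hij : Γ.Adj i j) (hne_kj : k ≠ j) (h₁ : Square (i, X) (k, Y))
    (h₂ : Square (k, Y) (j, Z)) (hlen : length Y ≤ L) : Square (i, X) (j, Z) := by
  obtain ⟨A, rfl, rfl⟩ := (square_iff_of_adj hki.symm).1 h₁
  obtain ⟨B, hAB, rfl⟩ := (square_iff_of_not_adj hne_kj hkj).1 h₂
  simp only [length_mul, length_gen] at hlen
  have hjk := mt Γ.adj_symm hkj
  obtain ⟨S, hS, rfl⟩ := hL.of_adj hij hAB (by simp; omega)
  have hlenS := congrArg length hS
  simp only [length_mul, length_gen] at hlenS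
  obtain ⟨T, rfl, hT⟩ := hL.of_not_adj hne_kj hkj hS (by omega)
  simp only [length_mul, length_gen] at hlen hlenS
  obtain ⟨U, rfl, rfl⟩ := hL.of_adj hki.symm hT (by omega)
  refine (square_iff_of_adj hij).2 ⟨gen k * (gen i * (gen j * U)), ?_, ?_⟩
  · rw [gen_braid_assoc hij, gen_comm_assoc hkj, gen_comm_assoc hjk U, gen_braid_assoc hki]
  · rw [gen_comm_assoc hjk (gen i * (gen j * U)), gen_braid_assoc hij.symm,
      gen_braid_assoc hki.symm, gen_comm_assoc hkj]

lemma square_trans_braid_braid (hki : Γ.Adj k i) (hkj : Γ.Adj k j) (hij : ¬ Γ.Adj i j)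
    (hne_ij : i ≠ j) (h₁ : Square (i, X) (k, Y)) (h₂ : Square (k, Y) (j, Z))
    (hlen : length Y ≤ L) : Square (i, X) (j, Z) := by
  obtain ⟨A, rfl, rfl⟩ := (square_iff_of_adj hki.symm).1 h₁
  obtain ⟨B, hAB, rfl⟩ := (square_iff_of_adj hkj).1 h₂
  have hlenB := congrArg length hAB
  simp only [length_mul, length_gen] at hlen hlenB
  have hji := mt Γ.adj_symm hij
  obtain ⟨S, hA, hB⟩ := hL.of_not_adj hne_ij hij hAB (by simp; omega)
  obtain ⟨T, rfl, hT⟩ := hL.of_adj hkj hA (by omega)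
  obtain ⟨U, rfl, hU⟩ := hL.of_adj hki hB (by omega)
  have hlenT := congrArg length hT
  simp only [length_mul, length_gen] at hlen hlenT
  have hTU : gen j * T = gen i * U := hL.cancel (hT.symm.trans hU) (by simp; omega)
  obtain ⟨W, rfl, rfl⟩ := hL.of_not_adj hne_ij.symm hji hTU (by omega)
  refine (square_iff_of_not_adj hne_ij hij).2 ⟨gen k * (gen j * (gen i * (gen k * W))), ?_, ?_⟩
  · rw [gen_comm_assoc hij, gen_braid_assoc hki.symm, gen_braid_assoc hkj]
  · rw [gen_comm_assoc hji, gen_braid_assoc hkj.symm, gen_braid_assoc hki, gen_comm_assoc hij]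

end SquaresBelow

section TriangleFree

variable (hΓ : Γ.CliqueFree 3)
include hΓ

/-- The cube condition on three generators. The only excluded configuration is a triangle in `Γ`,
for which the three generators have no common right multiple. -/
lemma SquaresBelow.square_trans (hL : SquaresBelow Γ L) (h₁ : Square (i, X) (k, Y))
    (h₂ : Square (k, Y) (j, Z)) (hlen : length Y ≤ L) : Square (i, X) (j, Z) := by
  classical
  rcases eq_or_ne i j with rfl | hne_ij
  · exact hL.square_trans_self h₁ h₂ hlen
  rcases eq_or_ne k i with rfl | hne_ki
  · rwa [square_self_iff.1 h₁]
  rcases eq_or_ne k j with rfl | hne_kj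
  · rwa [← square_self_iff.1 h₂]
  have hji (h : ¬ Γ.Adj i j) : ¬ Γ.Adj j i := mt Γ.adj_symm h
  by_cases hki : Γ.Adj k i <;> by_cases hkj : Γ.Adj k j
  · have hij : ¬ Γ.Adj i j := fun hij =>
      hΓ {k, i, j} (SimpleGraph.is3Clique_triple_iff.2 ⟨hki, hkj, hij⟩)
    exact hL.square_trans_braid_braid hki hkj hij hne_ij h₁ h₂ hlen
  · by_cases hij : Γ.Adj i j
    · exact hL.square_trans_braid_comm_of_adj hki hkj hij hne_kj h₁ h₂ hlen
    · exact hL.square_trans_braid_comm_of_not_adj hki hkj hij hne_kj hne_ij h₁ h₂ hlen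
  · refine symm_of Square ?_
    by_cases hij : Γ.Adj i j
    · exact hL.square_trans_braid_comm_of_adj hkj hki hij.symm hne_ki (symm_of _ h₂)
        (symm_of _ h₁) hlen
    · exact hL.square_trans_braid_comm_of_not_adj hkj hki (hji hij) hne_ki hne_ij.symm
        (symm_of _ h₂) (symm_of _ h₁) hlen
  · exact hL.square_trans_comm_comm hki hkj hne_ki hne_kj h₁ h₂ hlen

lemma squaresBelow (L : ℕ) : SquaresBelow Γ L := by
  induction L with
  | zero => exact fun _ _ _ _ _ hlen => absurd hlen (Nat.not_lt_zero _)
  | succ L ih =>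
    intro i j X Y h hlen
    suffices hchain : ∀ q, Relation.ReflTransGen Square (i, X) q → Square (i, X) q from
      hchain _ (reflTransGen_square_of_gen_mul_eq h)
    intro q hq
    induction hq with
    | refl => exact square_self_iff.2 rfl
    | tail _ hqr ihq =>
      have hlen_eq := congrArg length ihq.gen_mul_eq
      simp only [length_mul, length_gen] at hlen_eq
      exact ih.square_trans hΓ ihq hqr (by omega)

lemma square_of_gen_mul_eq (h : gen i * X = gen j * Y) : Square (i, X) (j, Y) :=
  squaresBelow hΓ _ h (Nat.lt_succ_self _)

lemma isLeftCancelMul : IsLeftCancelMul (ArtinMonoid Γ) where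
  mul_left_cancel a := by
    induction a using Submonoid.induction_of_closure_eq_top_left closure_range_gen with
    | one => exact isRegular_one.left
    | mul_left _ hx y ih =>
      obtain ⟨i, rfl⟩ := hx
      have hi : IsLeftRegular (gen i : ArtinMonoid Γ) := fun X Y h =>
        square_self_iff.1 (square_of_gen_mul_eq hΓ h)
      exact hi.mul ih

lemma isRightLcm_gen (i j : V) :
    IsRightLcm (gen i) (gen j) (gen i * compl i j : ArtinMonoid Γ) := by
  intro q
  constructor
  · intro h
    exact ⟨dvd_of_mul_right_dvd h, dvd_of_mul_right_dvd (gen_mul_compl i j ▸ h)⟩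
  · rintro ⟨⟨X, rfl⟩, Y, hXY⟩
    obtain ⟨Z, rfl, -⟩ := square_iff.1 (square_of_gen_mul_eq hΓ hXY)
    exact ⟨Z, (mul_assoc _ _ _).symm⟩

lemma hasRightLcms : HasRightLcms (ArtinMonoid Γ) := by
  have := isLeftCancelMul hΓ
  refine hasRightLcms_of_generators closure_range_gen length length_mul ?_ ?_
  · rintro _ ⟨i, rfl⟩
    simp
  · rintro _ ⟨i, rfl⟩ _ ⟨j, rfl⟩ _ _ _
    exact ⟨_, isRightLcm_gen hΓ i j⟩

end TriangleFree

end ArtinMonoid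

section Garside

variable {M : Type*} [Monoid M] {s : ℕ → M} {m k i j : ℕ}

/-- The ascending product `s 0 * s 1 * ⋯ * s (k - 1)`. -/
def ascProd (s : ℕ → M) (k : ℕ) : M := ((List.range k).map s).prod

/-- Garside's fundamental element `ascProd s k * ascProd s (k - 1) * ⋯ * ascProd s 1` on the first
`k` terms of the sequence `s`. -/
def garsideElt (s : ℕ → M) (k : ℕ) : M :=
  ((List.range k).reverse.map fun j => ascProd s (j + 1)).prod

lemma ascProd_zero : ascProd s 0 = 1 := by simp [ascProd]

lemma ascProd_succ (s : ℕ → M) (k : ℕ) : ascProd s (k + 1) = ascProd s k * s k := by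
  simp [ascProd, List.range_succ]

lemma garsideElt_zero : garsideElt s 0 = 1 := by simp [garsideElt]

lemma garsideElt_succ (s : ℕ → M) (k : ℕ) :
    garsideElt s (k + 1) = ascProd s (k + 1) * garsideElt s k := by
  simp [garsideElt, List.range_succ]

lemma dvd_ascProd_succ (s : ℕ → M) (k : ℕ) : s 0 ∣ ascProd s (k + 1) := by
  simp [ascProd, List.range_succ_eq_map]

lemma map_garsideElt {N : Type*} [Monoid N] (f : M →* N) (s : ℕ → M) (k : ℕ) :
    f (garsideElt s k) = garsideElt (f ∘ s) k := by
  simp [garsideElt, ascProd, map_list_prod, Function.comp_def]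

/-- The first `m` terms of the sequence `s` satisfy Artin's relations. -/
structure IsBraidFamily (s : ℕ → M) (m : ℕ) : Prop where
  comm : ∀ ⦃i j⦄, i + 1 < j → j < m → Commute (s i) (s j)
  braid : ∀ ⦃i⦄, i + 1 < m → s i * (s (i + 1) * s i) = s (i + 1) * (s i * s (i + 1))

namespace IsBraidFamily

variable (h : IsBraidFamily s m)
include h

lemma commute_ascProd (hkj : k < j) (hj : j < m) : Commute (ascProd s k) (s j) := by
  induction k with
  | zero => simp [ascProd_zero]
  | succ k ih =>
    rw [ascProd_succ]
    exact (ih (by omega)).mul_left (h.comm hkj hj)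

lemma commute_garsideElt (hkj : k < j) (hj : j < m) : Commute (garsideElt s k) (s j) := by
  induction k with
  | zero => simp [garsideElt_zero]
  | succ k ih =>
    rw [garsideElt_succ]
    exact (h.commute_ascProd hkj hj).mul_left (ih (by omega))

lemma succ_mul_ascProd (hik : i + 1 < k) (hk : k ≤ m) :
    s (i + 1) * ascProd s k = ascProd s k * s i := by
  induction k, hik using Nat.le_induction with
  | base =>
    have hcomm := h.commute_ascProd (Nat.lt_succ_self i) (by omega)
    rw [ascProd_succ, ascProd_succ, ← mul_assoc, ← mul_assoc, ← hcomm.eq]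
    simp only [mul_assoc, h.braid (by omega : i + 1 < m)]
  | succ k hik ih =>
    rw [ascProd_succ, ← mul_assoc, ih (by omega), mul_assoc, mul_assoc,
      (h.comm hik (by omega)).eq]

lemma zero_mul_ascProd_mul_ascProd (hjk : j ≤ k) (hk : k + 1 ≤ m) :
    s 0 * (ascProd s (k + 1) * ascProd s j) = ascProd s (j + 1) * ascProd s (k + 1) := by
  induction j with
  | zero => simp [ascProd]
  | succ j ih =>
    rw [ascProd_succ s j, ← mul_assoc (ascProd s (k + 1)), ← mul_assoc, ih (by omega), mul_assoc,
      ← h.succ_mul_ascProd (by omega) hk, ← mul_assoc, ← ascProd_succ s (j + 1)]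

lemma zero_mul_garsideElt_succ (hk : k + 1 ≤ m) :
    s 0 * garsideElt s (k + 1) = garsideElt s (k + 1) * s k := by
  cases k with
  | zero => simp [garsideElt, ascProd]
  | succ k =>
    have hcomm := h.commute_garsideElt (Nat.lt_succ_self k) (by omega)
    calc s 0 * garsideElt s (k + 2)
        = s 0 * (ascProd s (k + 2) * ascProd s (k + 1)) * garsideElt s k := by
          simp only [garsideElt_succ, mul_assoc]
      _ = ascProd s (k + 2) * ascProd s (k + 1) * (s (k + 1) * garsideElt s k) := by
          rw [h.zero_mul_ascProd_mul_ascProd le_rfl hk, ascProd_succ s (k + 1)]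
          simp only [mul_assoc]
      _ = garsideElt s (k + 2) * s (k + 1) := by
          rw [← hcomm.eq]
          simp only [garsideElt_succ, mul_assoc]

lemma mul_garsideElt (hik : i < k) (hk : k ≤ m) :
    s i * garsideElt s k = garsideElt s k * s (k - 1 - i) := by
  induction k generalizing i with
  | zero => omega
  | succ k ih =>
    cases i with
    | zero => exact h.zero_mul_garsideElt_succ hk
    | succ i =>
      rw [garsideElt_succ, ← mul_assoc, h.succ_mul_ascProd hik hk, mul_assoc,
        ih (by omega) (by omega), ← mul_assoc]
      congr 2
      omega

lemma dvd_garsideElt (hik : i < k) (hk : k ≤ m) : s i ∣ garsideElt s k := by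
  induction k generalizing i with
  | zero => omega
  | succ k ih =>
    rw [garsideElt_succ]
    cases i with
    | zero => exact dvd_mul_of_dvd_left (dvd_ascProd_succ s k) _
    | succ i =>
      obtain ⟨c, hc⟩ := ih (i := i) (by omega) (by omega)
      rw [hc, ← mul_assoc, ← h.succ_mul_ascProd hik hk, mul_assoc]
      exact dvd_mul_right _ _

end IsBraidFamily

end Garside

section PathGraph

variable {m : ℕ}

open SimpleGraph in
lemma cliqueFree_three_pathGraph (m : ℕ) : (pathGraph m).CliqueFree 3 :=
  (pathGraph.bicoloring m).colorable.cliqueFree (by simp)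

namespace ArtinMonoid

/-- The positive braid monoid on `m` generators, that is on `m + 1` strands. -/
abbrev PosBraid (m : ℕ) := ArtinMonoid (SimpleGraph.pathGraph m)

instance : IsLeftCancelMul (PosBraid m) := isLeftCancelMul (cliqueFree_three_pathGraph m)

/-- The generators of the positive braid monoid as a sequence, with junk value `1` out of range. -/
def genSeq (m i : ℕ) : PosBraid m := if h : i < m then gen ⟨i, h⟩ else 1

lemma genSeq_val (i : Fin m) : genSeq m i = gen i := dif_pos i.2

lemma isBraidFamily_genSeq (m : ℕ) : IsBraidFamily (genSeq m) m where
  comm i j hij hj := by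
    rw [genSeq, genSeq, dif_pos (by omega), dif_pos hj]
    exact gen_comm (by simp only [SimpleGraph.pathGraph_adj]; omega)
  braid i hi := by
    rw [genSeq, genSeq, dif_pos (by omega), dif_pos hi]
    exact gen_braid (by simp [SimpleGraph.pathGraph_adj])

lemma gen_mul_garsideElt (i : Fin m) :
    gen i * garsideElt (genSeq m) m = garsideElt (genSeq m) m * gen i.rev := by
  have h := (isBraidFamily_genSeq m).mul_garsideElt i.2 le_rfl
  rwa [genSeq_val, show m - 1 - (i : ℕ) = i.rev by rw [Fin.val_rev]; omega, genSeq_val] at h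

lemma gen_dvd_garsideElt (i : Fin m) : gen i ∣ garsideElt (genSeq m) m := by
  simpa only [genSeq_val] using (isBraidFamily_genSeq m).dvd_garsideElt i.2 le_rfl

lemma garsideElt_mul_self_mem_center (m : ℕ) :
    garsideElt (genSeq m) m * garsideElt (genSeq m) m ∈ Submonoid.center (PosBraid m) := by
  rw [Submonoid.mem_center_iff]
  intro X
  induction X using Submonoid.induction_of_closure_eq_top_left closure_range_gen with
  | one => simp
  | mul_left _ hx Y ih =>
    obtain ⟨i, rfl⟩ := hx
    have hi : gen i * (garsideElt (genSeq m) m * garsideElt (genSeq m) m) =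
        garsideElt (genSeq m) m * garsideElt (genSeq m) m * gen i := by
      rw [← mul_assoc, gen_mul_garsideElt, mul_assoc, gen_mul_garsideElt, Fin.rev_rev, mul_assoc]
    rw [mul_assoc, ih, ← mul_assoc, hi, mul_assoc]

lemma isUnit_map_gen {N : Type*} [Monoid N] {f : PosBraid m →* N}
    (hf : IsUnit (f (garsideElt (genSeq m) m * garsideElt (genSeq m) m))) (i : Fin m) :
    IsUnit (f (gen i)) := by
  obtain ⟨c, hc⟩ := gen_dvd_garsideElt i
  have hcenter := garsideElt_mul_self_mem_center m
  rw [hc, mul_assoc] at hf hcenter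
  have hcomm := (commute_of_mul_mem_center hcenter).map f
  rw [map_mul] at hf
  exact (hcomm.isUnit_mul_iff.1 hf).1

end ArtinMonoid

end PathGraph

namespace BraidGroup

variable {n : ℕ} {x y p a b : BraidGroup n} {i j : Fin (n - 1)}

section PositiveMonoid

lemma σ_mul_comm_of_lt (hij : (i : ℕ) + 1 < j) : (σ i * σ j : BraidGroup n) = σ j * σ i := by
  have h := PresentedGroup.one_of_mem (rels := braidRels n) (Or.inl ⟨i, j, hij, rfl⟩)
  simp only [map_mul, map_inv] at h
  exact mul_inv_eq_iff_eq_mul.1 (mul_inv_eq_one.1 h)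

lemma σ_braid_of_succ_eq (hij : (i : ℕ) + 1 = j) :
    (σ i * (σ j * σ i) : BraidGroup n) = σ j * (σ i * σ j) := by
  have h := PresentedGroup.one_of_mem (rels := braidRels n) (Or.inr ⟨i, j, hij, rfl⟩)
  simp only [map_mul, map_inv, mul_assoc] at h
  exact mul_inv_eq_one.1 h

open SimpleGraph in
lemma σ_mul_comm (hij : ¬ (pathGraph (n - 1)).Adj i j) :
    (σ i * σ j : BraidGroup n) = σ j * σ i := by
  rw [pathGraph_adj] at hij
  rcases lt_trichotomy (i : ℕ) j with h | h | h
  · exact σ_mul_comm_of_lt (by omega)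
  · rw [Fin.ext h]
  · exact (σ_mul_comm_of_lt (by omega)).symm

open SimpleGraph in
lemma σ_braid (hij : (pathGraph (n - 1)).Adj i j) :
    (σ i * (σ j * σ i) : BraidGroup n) = σ j * (σ i * σ j) := by
  rcases pathGraph_adj.1 hij with h | h
  · exact σ_braid_of_succ_eq h
  · exact (σ_braid_of_succ_eq h).symm

lemma closure_range_σ (n : ℕ) : Subgroup.closure (Set.range (σ (n := n))) = ⊤ :=
  PresentedGroup.closure_range_of _

open SimpleGraph in
/-- The universal property of the braid group, with the relations in the same form as for the
positive braid monoid. -/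
def lift {G : Type*} [Group G] (f : Fin (n - 1) → G)
    (hcomm : ∀ i j, ¬ (pathGraph (n - 1)).Adj i j → f i * f j = f j * f i)
    (hbraid : ∀ i j, (pathGraph (n - 1)).Adj i j → f i * (f j * f i) = f j * (f i * f j)) :
    BraidGroup n →* G :=
  PresentedGroup.toGroup (f := f) <| by
    rintro r (⟨i, j, hij, rfl⟩ | ⟨i, j, hij, rfl⟩)
    · simp only [map_mul, map_inv, FreeGroup.lift_apply_of]
      rw [hcomm i j (by rw [pathGraph_adj]; omega)]
      group
    · simp only [map_mul, map_inv, FreeGroup.lift_apply_of]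
      rw [mul_inv_eq_one, mul_assoc, hbraid i j (pathGraph_adj.2 (.inl hij)), mul_assoc]

open SimpleGraph in
@[simp]
lemma lift_σ {G : Type*} [Group G] (f : Fin (n - 1) → G)
    (hcomm : ∀ i j, ¬ (pathGraph (n - 1)).Adj i j → f i * f j = f j * f i)
    (hbraid : ∀ i j, (pathGraph (n - 1)).Adj i j → f i * (f j * f i) = f j * (f i * f j))
    (i : Fin (n - 1)) : lift f hcomm hbraid (σ i) = f i :=
  PresentedGroup.toGroup.of _

open ArtinMonoid

/-- The canonical homomorphism from the positive braid monoid to the braid group. -/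
def ofPos (n : ℕ) : PosBraid (n - 1) →* BraidGroup n :=
  ArtinMonoid.lift σ (fun _ _ => σ_mul_comm) (fun _ _ => σ_braid)

@[simp]
lemma ofPos_gen (i : Fin (n - 1)) : ofPos n (gen i) = σ i := lift_gen ..

/-- Garside's embedding theorem: the monoid embeds into its localisation at the central element
`Δ ^ 2`, in which the generators become invertible, so that this embedding factors through
`ofPos`. -/
lemma ofPos_injective (n : ℕ) : Function.Injective (ofPos n) := by
  obtain ⟨N, _, f, hf, hfΔ⟩ :=
    exists_injective_monoidHom_isUnit (garsideElt_mul_self_mem_center (n - 1))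
  let g : BraidGroup n →* Nˣ := lift (fun i => (isUnit_map_gen hfΔ i).unit)
    (fun i j hij => Units.ext <| by simp [← map_mul, gen_comm hij])
    (fun i j hij => Units.ext <| by simp [← map_mul, gen_braid hij])
  have hfactor : ((Units.coeHom N).comp g).comp (ofPos n) = f :=
    PresentedMonoid.ext _ fun i => by
      change (g (ofPos n (gen i)) : N) = f (gen i)
      simp [g]
  refine Function.Injective.of_comp (f := (Units.coeHom N).comp g) ?_
  rwa [← MonoidHom.coe_comp, hfactor]

lemma positives_eq_mrange (n : ℕ) : positives n = MonoidHom.mrange (ofPos n) := by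
  rw [MonoidHom.mrange_eq_map, ← closure_range_gen, MonoidHom.map_mclosure, ← Set.range_comp]
  simp [positives, Function.comp_def]

lemma isPositive_iff_exists_ofPos : IsPositive x ↔ ∃ X, ofPos n X = x := by
  rw [IsPositive, positives_eq_mrange, MonoidHom.mem_mrange]

lemma leftDvd_ofPos_iff {X Y : PosBraid (n - 1)} : LeftDvd (ofPos n X) (ofPos n Y) ↔ X ∣ Y := by
  constructor
  · rintro ⟨_, hp, h⟩
    obtain ⟨P, rfl⟩ := isPositive_iff_exists_ofPos.1 hp
    exact ⟨P, ofPos_injective n (by rw [map_mul, h])⟩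
  · rintro ⟨P, rfl⟩
    exact ⟨ofPos n P, isPositive_iff_exists_ofPos.2 ⟨P, rfl⟩, (map_mul ..).symm⟩

lemma ofPos_garsideElt (n : ℕ) : ofPos n (garsideElt (genSeq (n - 1)) (n - 1)) = Δ n := by
  have hgen : ofPos n ∘ genSeq (n - 1) = σ' n := by
    funext i
    simp only [Function.comp_apply, genSeq, σ']
    split_ifs <;> simp
  rw [map_garsideElt, hgen]
  rfl

lemma σ_leftDvd_Δ (i : Fin (n - 1)) : LeftDvd (σ i) (Δ n) := by
  rw [← ofPos_garsideElt, ← ofPos_gen, leftDvd_ofPos_iff]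
  exact gen_dvd_garsideElt i

lemma σ_mul_Δ (i : Fin (n - 1)) : σ i * Δ n = Δ n * σ i.rev := by
  simp only [← ofPos_garsideElt, ← ofPos_gen, ← map_mul, gen_mul_garsideElt]

lemma leftDvd_of_leftDvd_mul {c : BraidGroup n} (ha : IsPositive a) (hb : IsPositive b)
    (hc : IsPositive c) (hbc : ∀ j, ¬ (LeftDvd (σ j) b ∧ LeftDvd (σ j) c))
    (hib : LeftDvd (σ i) (a * b)) (hic : LeftDvd (σ i) (a * c)) : LeftDvd (σ i) a := by
  obtain ⟨A, rfl⟩ := isPositive_iff_exists_ofPos.1 ha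
  obtain ⟨B, rfl⟩ := isPositive_iff_exists_ofPos.1 hb
  obtain ⟨C, rfl⟩ := isPositive_iff_exists_ofPos.1 hc
  simp only [← map_mul, ← ofPos_gen, leftDvd_ofPos_iff] at hbc hib hic ⊢
  refine (hasRightLcms (cliqueFree_three_pathGraph _)).dvd_left_of_dvd_mul (fun R hB hC => ?_)
    hib hic
  obtain rfl | ⟨j, hj⟩ := eq_one_or_exists_gen_dvd R
  · exact isUnit_one
  · exact absurd ⟨hj.trans hB, hj.trans hC⟩ (hbc j)

end PositiveMonoid

section Positive

lemma isPositive_one : IsPositive (1 : BraidGroup n) := (positives n).one_mem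

lemma isPositive_σ (i : Fin (n - 1)) : IsPositive (σ i : BraidGroup n) :=
  Submonoid.subset_closure ⟨i, rfl⟩

lemma IsPositive.mul (hx : IsPositive x) (hy : IsPositive y) : IsPositive (x * y) :=
  (positives n).mul_mem hx hy

lemma IsPositive.eq_one_or_exists_leftDvd (hx : IsPositive x) :
    x = 1 ∨ ∃ i, LeftDvd (σ i) x := by
  rcases eq_one_or_eq_mul_of_mem_closure hx with h | ⟨_, ⟨i, rfl⟩, y, hy, rfl⟩
  · exact .inl h
  · exact .inr ⟨i, y, hy, rfl⟩

lemma leftDvd_iff : LeftDvd x y ↔ IsPositive (x⁻¹ * y) := by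
  constructor
  · rintro ⟨p, hp, rfl⟩
    rwa [inv_mul_cancel_left]
  · exact fun h => ⟨_, h, mul_inv_cancel_left x y⟩

lemma mul_leftDvd_mul_iff : LeftDvd (p * x) (p * y) ↔ LeftDvd x y := by
  simp [leftDvd_iff, mul_assoc]

lemma leftDvd_mul_right (x : BraidGroup n) (hp : IsPositive p) : LeftDvd x (x * p) :=
  ⟨p, hp, rfl⟩

lemma LeftDvd.trans (hxy : LeftDvd x y) (hyp : LeftDvd y p) : LeftDvd x p := by
  obtain ⟨q, hq, rfl⟩ := hxy
  obtain ⟨r, hr, rfl⟩ := hyp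
  exact ⟨q * r, hq.mul hr, (mul_assoc x q r).symm⟩

lemma isPositive_Δ (n : ℕ) : IsPositive (Δ n) :=
  isPositive_iff_exists_ofPos.2 ⟨_, ofPos_garsideElt n⟩

lemma IsPermBraid.compl (ha : IsPermBraid a) : IsPositive (a⁻¹ * Δ n) :=
  leftDvd_iff.1 ha.2

end Positive

section ExponentSum

/-- The exponent sum of a braid, as a homomorphism to the integers. -/
def exponentSumHom (n : ℕ) : BraidGroup n →* Multiplicative ℤ :=
  lift (fun _ => Multiplicative.ofAdd 1) (fun _ _ _ => rfl) (fun _ _ _ => rfl)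

/-- The exponent sum of a braid, which is its length when the braid is positive. -/
def exponentSum (x : BraidGroup n) : ℤ := (exponentSumHom n x).toAdd

@[simp]
lemma exponentSum_one : exponentSum (1 : BraidGroup n) = 0 := by simp [exponentSum]

@[simp]
lemma exponentSum_mul (x y : BraidGroup n) :
    exponentSum (x * y) = exponentSum x + exponentSum y := by simp [exponentSum]

@[simp]
lemma exponentSum_inv (x : BraidGroup n) : exponentSum x⁻¹ = - exponentSum x := by
  simp [exponentSum]

@[simp]
lemma exponentSum_zpow (x : BraidGroup n) (u : ℤ) :
    exponentSum (x ^ u) = u * exponentSum x := by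
  simp [exponentSum]

@[simp]
lemma exponentSum_σ (i : Fin (n - 1)) : exponentSum (σ i : BraidGroup n) = 1 := by
  simp [exponentSum, exponentSumHom]

lemma IsPositive.exponentSum_nonneg (hx : IsPositive x) : 0 ≤ exponentSum x := by
  induction hx using Submonoid.closure_induction with
  | mem _ h => obtain ⟨i, rfl⟩ := h; simp
  | one => simp
  | mul x y _ _ hx hy => simpa using add_nonneg hx hy

lemma LeftDvd.exponentSum_le (h : LeftDvd x y) : exponentSum x ≤ exponentSum y := by
  obtain ⟨p, hp, rfl⟩ := h
  simpa using hp.exponentSum_nonneg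

lemma not_σ_leftDvd_one (i : Fin (n - 1)) : ¬ LeftDvd (σ i : BraidGroup n) 1 :=
  fun h => by simpa using h.exponentSum_le

lemma IsPositive.exponentSum_pos (hx : IsPositive x) (hne : x ≠ 1) : 0 < exponentSum x := by
  obtain ⟨i, hi⟩ := hx.eq_one_or_exists_leftDvd.resolve_left hne
  have hle := hi.exponentSum_le
  rw [exponentSum_σ] at hle
  omega

end ExponentSum

section Tau

lemma τ_σ (i : Fin (n - 1)) : τ n (σ i) = σ i.rev := by
  have hconj : ∃ f : BraidGroup n →* BraidGroup n, ∀ i : Fin (n - 1), f (σ i) = σ i.rev :=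
    ⟨(MulAut.conj (Δ n)⁻¹).toMonoidHom, fun i => by simp [mul_assoc, σ_mul_Δ]⟩
  exact Classical.epsilon_spec hconj i

lemma τ_eq_conj : τ n = (MulAut.conj (Δ n)).toMonoidHom :=
  PresentedGroup.ext fun i => (τ_σ i).trans <| by
    change σ i.rev = Δ n * σ i * (Δ n)⁻¹
    rw [eq_mul_inv_iff_mul_eq, σ_mul_Δ, Fin.rev_rev]

lemma conj_Δ_sq : MulAut.conj (Δ n) ^ (2 : ℤ) = 1 := by
  have hτ : (τ n).comp (τ n) = MonoidHom.id _ :=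
    PresentedGroup.ext fun i => by
      change τ n (τ n (σ i)) = σ i
      rw [τ_σ, τ_σ, Fin.rev_rev]
  rw [τ_eq_conj] at hτ
  rw [zpow_two]
  exact MulEquiv.ext fun x => DFunLike.congr_fun hτ x

lemma τpow_eq_conj (u : ℤ) (x : BraidGroup n) : τpow u x = Δ n ^ u * x * (Δ n ^ u)⁻¹ := by
  rw [← MulAut.conj_apply, map_zpow, τpow]
  rcases Int.even_or_odd' u with ⟨r, rfl | rfl⟩
  · rw [if_pos (even_two_mul r), zpow_mul, conj_Δ_sq, one_zpow, MulAut.one_apply]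
  · rw [if_neg (Int.not_even_two_mul_add_one r), zpow_add_one, zpow_mul, conj_Δ_sq, one_zpow,
      one_mul, τ_eq_conj]
    rfl

lemma τpow_mul (u : ℤ) (x y : BraidGroup n) : τpow u (x * y) = τpow u x * τpow u y := by
  simp [τpow_eq_conj, mul_assoc]

lemma τpow_one (u : ℤ) : τpow u (1 : BraidGroup n) = 1 := by
  simp [τpow_eq_conj]

lemma exists_τpow_σ (u : ℤ) (i : Fin (n - 1)) : ∃ j, τpow u (σ i) = σ j := by
  unfold τpow
  split_ifs
  · exact ⟨i, rfl⟩
  · exact ⟨i.rev, τ_σ i⟩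

lemma IsPositive.map_τpow (hx : IsPositive x) (u : ℤ) : IsPositive (τpow u x) := by
  induction hx using Submonoid.closure_induction with
  | mem _ h =>
    obtain ⟨i, rfl⟩ := h
    obtain ⟨j, hj⟩ := exists_τpow_σ u i
    exact hj ▸ isPositive_σ j
  | one => exact (τpow_one u).symm ▸ isPositive_one
  | mul x y _ _ hx hy => exact τpow_mul u x y ▸ hx.mul hy

lemma leftDvd_τpow_iff (u : ℤ) : LeftDvd x (τpow u y) ↔ LeftDvd (τpow (-u) x) y := by
  have h : τpow u ((τpow (-u) x)⁻¹ * y) = x⁻¹ * τpow u y := by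
    simp [τpow_eq_conj, mul_assoc]
  rw [leftDvd_iff, leftDvd_iff, ← h]
  refine ⟨fun hp => ?_, fun hp => hp.map_τpow u⟩
  simpa [τpow_eq_conj, mul_assoc] using hp.map_τpow (-u)

lemma isPositive_Δ_mul_σ_inv (i : Fin (n - 1)) : IsPositive (Δ n * (σ i)⁻¹) := by
  have h : Δ n * (σ i)⁻¹ = (σ i.rev)⁻¹ * Δ n := by
    rw [mul_inv_eq_iff_eq_mul, mul_assoc, eq_inv_mul_iff_mul_eq, σ_mul_Δ, Fin.rev_rev]
  exact h ▸ leftDvd_iff.1 (σ_leftDvd_Δ i.rev)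

lemma exists_isPositive_Δ_pow_mul (x : BraidGroup n) : ∃ k : ℕ, IsPositive (Δ n ^ k * x) := by
  have hx : x ∈ Subgroup.closure (Set.range σ) := by simp [closure_range_σ]
  induction hx using Subgroup.closure_induction_right with
  | one => exact ⟨0, by simpa using isPositive_one⟩
  | mul_right y _ z hz ih =>
    obtain ⟨i, rfl⟩ := hz
    obtain ⟨k, hk⟩ := ih
    exact ⟨k, by simpa only [mul_assoc] using hk.mul (isPositive_σ i)⟩
  | mul_inv_cancel y _ z hz ih =>
    obtain ⟨i, rfl⟩ := hz
    obtain ⟨k, hk⟩ := ih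
    refine ⟨k + 1, ?_⟩
    have h := (hk.map_τpow 1).mul (isPositive_Δ_mul_σ_inv i)
    simpa [τpow_eq_conj, pow_succ', mul_assoc] using h

end Tau

section StartingSet

/-- The starting set of a braid `x`: the indices of the generators which left-divide it. -/
def startingSet (x : BraidGroup n) : Set (Fin (n - 1)) := {i | LeftDvd (σ i) x}

lemma mem_startingSet : i ∈ startingSet x ↔ LeftDvd (σ i) x := Iff.rfl

lemma startingSet_mono (h : LeftDvd x y) : startingSet x ⊆ startingSet y :=
  fun _ hi => LeftDvd.trans hi h

@[simp]
lemma startingSet_one : startingSet (1 : BraidGroup n) = ∅ :=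
  Set.eq_empty_of_forall_notMem not_σ_leftDvd_one

lemma startingSet_Δ : startingSet (Δ n) = Set.univ :=
  Set.eq_univ_of_forall σ_leftDvd_Δ

lemma IsPositive.startingSet_eq_empty_iff (hx : IsPositive x) : startingSet x = ∅ ↔ x = 1 := by
  refine ⟨fun h => ?_, fun h => h ▸ startingSet_one⟩
  refine hx.eq_one_or_exists_leftDvd.resolve_right ?_
  rintro ⟨i, hi⟩
  exact h.subset hi

lemma exists_startingSet_τpow (u : ℤ) : ∃ ρ : Fin (n - 1) → Fin (n - 1),
    ∀ x : BraidGroup n, startingSet (τpow u x) = ρ ⁻¹' startingSet x := by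
  choose ρ hρ using exists_τpow_σ (n := n) (-u)
  exact ⟨ρ, fun x => Set.ext fun i => by
    rw [mem_startingSet, leftDvd_τpow_iff, hρ, Set.mem_preimage, mem_startingSet]⟩

lemma isLeftWeighted_iff :
    IsLeftWeighted a b ↔ Disjoint (startingSet (a⁻¹ * Δ n)) (startingSet b) := by
  rw [Set.disjoint_left, IsLeftWeighted]
  exact forall_congr' fun _ => not_and

lemma IsLeftWeighted.startingSet_mul (hab : IsLeftWeighted a b) (ha : IsPermBraid a)
    (hb : IsPositive b) : startingSet (a * b) = startingSet a := by
  refine (startingSet_mono (leftDvd_mul_right a hb)).antisymm' fun i hi => ?_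
  refine leftDvd_of_leftDvd_mul ha.1 ha.compl hb hab ?_ hi
  rw [mul_inv_cancel_left]
  exact σ_leftDvd_Δ i

lemma IsPermBraid.isPermBraid_compl (ha : IsPermBraid a) : IsPermBraid (a⁻¹ * Δ n) := by
  refine ⟨ha.compl, leftDvd_iff.2 ?_⟩
  convert ha.1.map_τpow (-1) using 1
  simp [τpow_eq_conj]

lemma IsLeftWeighted.compl (hab : IsLeftWeighted a b) :
    IsLeftWeighted (b⁻¹ * Δ n) (τpow (-1) (a⁻¹ * Δ n)) := by
  obtain ⟨ρ, hρ⟩ := exists_startingSet_τpow (n := n) (-1)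
  have h : (b⁻¹ * Δ n)⁻¹ * Δ n = τpow (-1) b := by simp [τpow_eq_conj]
  rw [isLeftWeighted_iff] at hab ⊢
  rw [h, hρ, hρ]
  exact hab.symm.preimage ρ

variable {L : List (BraidGroup n)}

lemma isPositive_list_prod (hL : ∀ a ∈ L, IsPermBraid a) : IsPositive L.prod :=
  (positives n).list_prod_mem fun a ha => (hL a ha).1

lemma startingSet_list_prod (hL : ∀ a ∈ L, IsPermBraid a) (hchain : L.IsChain IsLeftWeighted) :
    startingSet L.prod = startingSet (L.head?.getD 1) := by
  induction L with
  | nil => rfl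
  | cons a L ih =>
    rw [List.isChain_cons] at hchain
    rw [List.forall_mem_cons] at hL
    have hweighted : IsLeftWeighted a L.prod := by
      rw [isLeftWeighted_iff, ih hL.2 hchain.2]
      cases L with
      | nil => simp
      | cons b L => exact isLeftWeighted_iff.1 (hchain.1 b rfl)
    rw [List.prod_cons]
    exact hweighted.startingSet_mul hL.1 (isPositive_list_prod hL.2)

lemma compl_prod_concat (L : List (BraidGroup n)) (a : BraidGroup n) :
    (L ++ [a]).prod⁻¹ * Δ n ^ (L ++ [a]).length =
      a⁻¹ * Δ n * τpow (-1) (L.prod⁻¹ * Δ n ^ L.length) := by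
  simp [τpow_eq_conj, mul_assoc, pow_succ]

lemma isPositive_compl_list_prod (hL : ∀ a ∈ L, IsPermBraid a) :
    IsPositive (L.prod⁻¹ * Δ n ^ L.length) := by
  induction L using List.reverseRecOn with
  | nil => simpa using isPositive_one
  | append_singleton L a ih =>
    rw [compl_prod_concat]
    exact (hL a (by simp)).compl.mul ((ih fun b hb => hL b (by simp [hb])).map_τpow _)

lemma startingSet_compl_list_prod (hL : ∀ a ∈ L, IsPermBraid a)
    (hchain : L.IsChain IsLeftWeighted) (hne : L ≠ []) :
    startingSet (L.prod⁻¹ * Δ n ^ L.length) = startingSet ((L.getLast hne)⁻¹ * Δ n) := by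
  induction L using List.reverseRecOn with
  | nil => exact absurd rfl hne
  | append_singleton L a ih =>
    rw [List.isChain_append] at hchain
    have hL' : ∀ b ∈ L, IsPermBraid b := fun b hb => hL b (by simp [hb])
    have hweighted : IsLeftWeighted (a⁻¹ * Δ n) (τpow (-1) (L.prod⁻¹ * Δ n ^ L.length)) := by
      rcases eq_or_ne L [] with rfl | hne'
      · simp [isLeftWeighted_iff, τpow_one]
      · have hlast := hchain.2.2 _ (List.getLast?_eq_some_getLast hne') a rfl
        obtain ⟨ρ, hρ⟩ := exists_startingSet_τpow (n := n) (-1)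
        rw [isLeftWeighted_iff, hρ, ih hL' hchain.1 hne', ← hρ, ← isLeftWeighted_iff]
        exact hlast.compl
    rw [compl_prod_concat, List.getLast_append_singleton]
    exact hweighted.startingSet_mul (hL a (by simp)).isPermBraid_compl
      ((isPositive_compl_list_prod hL').map_τpow _)

end StartingSet

section WeightedForm

lemma exists_isLeftWeighted_inv_mul (hy : IsPositive y) :
    ∃ a, IsPermBraid a ∧ LeftDvd a y ∧ IsLeftWeighted a (a⁻¹ * y) := by
  obtain ⟨_, ⟨a, ha, hay, rfl⟩, hmax⟩ := Int.exists_greatest_of_bdd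
    (P := fun d => ∃ a : BraidGroup n, IsPermBraid a ∧ LeftDvd a y ∧ exponentSum a = d)
    ⟨exponentSum y, fun _ ⟨_, _, hay, hd⟩ => hd ▸ hay.exponentSum_le⟩
    ⟨_, 1, ⟨isPositive_one, leftDvd_iff.2 (by simpa using isPositive_Δ n)⟩,
      leftDvd_iff.2 (by simpa using hy), rfl⟩
  refine ⟨a, ha, hay, fun i ⟨hcompl, hrest⟩ => ?_⟩
  have hΔ : LeftDvd (a * σ i) (Δ n) := by simpa using mul_leftDvd_mul_iff (p := a).2 hcompl
  have hy : LeftDvd (a * σ i) y := by simpa using mul_leftDvd_mul_iff (p := a).2 hrest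
  have hle := hmax _ ⟨a * σ i, ⟨ha.1.mul (isPositive_σ i), hΔ⟩, hy, rfl⟩
  simp at hle

lemma exists_isWeightedForm_zero (hy : IsPositive y) (hΔ : ¬ LeftDvd (Δ n) y) :
    ∃ L, IsWeightedForm 0 L y := by
  induction hd : (exponentSum y).toNat using Nat.strong_induction_on generalizing y with
  | _ d ih =>
    by_cases hy1 : y = 1
    · exact ⟨[], by simp, List.isChain_nil, by simp [hy1]⟩
    obtain ⟨a, ha, hay, hweighted⟩ := exists_isLeftWeighted_inv_mul hy
    rw [isLeftWeighted_iff] at hweighted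
    have hz : IsPositive (a⁻¹ * y) := leftDvd_iff.1 hay
    have ha1 : a ≠ 1 := by
      rintro rfl
      simp [startingSet_Δ, hy.startingSet_eq_empty_iff, hy1] at hweighted
    have haΔ : a ≠ Δ n := fun h => hΔ (h ▸ hay)
    have hzΔ : ¬ LeftDvd (Δ n) (a⁻¹ * y) := fun h => by
      have huniv := Set.univ_subset_iff.1 (startingSet_Δ (n := n) ▸ startingSet_mono h)
      rw [huniv, Set.disjoint_univ, ha.compl.startingSet_eq_empty_iff, inv_mul_eq_one] at hweighted
      exact haΔ hweighted
    have hlt : (exponentSum (a⁻¹ * y)).toNat < d := by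
      have ha_pos := ha.1.exponentSum_pos ha1
      have hz_nonneg := hz.exponentSum_nonneg
      rw [exponentSum_mul, exponentSum_inv] at hz_nonneg ⊢
      omega
    obtain ⟨L, hL, hchain, hprod⟩ := ih _ hlt hz hzΔ rfl
    rw [zpow_zero, one_mul] at hprod
    refine ⟨a :: L, List.forall_mem_cons.2 ⟨⟨ha, ha1, haΔ⟩, hL⟩,
      List.isChain_cons.2 ⟨?_, hchain⟩, ?_⟩
    · intro b hb
      rw [hprod, startingSet_list_prod (fun c hc => (hL c hc).1) hchain, Option.mem_def.1 hb,
        Option.getD_some] at hweighted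
      exact isLeftWeighted_iff.2 hweighted
    · simp [← hprod]

lemma exists_isPositive_not_Δ_leftDvd [Nonempty (Fin (n - 1))] (x : BraidGroup n) :
    ∃ u : ℤ, IsPositive (Δ n ^ (-u) * x) ∧ ¬ LeftDvd (Δ n) (Δ n ^ (-u) * x) := by
  have hΔ : 1 ≤ exponentSum (Δ n) := by
    simpa using (σ_leftDvd_Δ (Classical.arbitrary (Fin (n - 1)))).exponentSum_le
  have hbound (u : ℤ) (hu : IsPositive (Δ n ^ (-u) * x)) : u ≤ |exponentSum x| := by
    have h := hu.exponentSum_nonneg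
    rw [exponentSum_mul, exponentSum_zpow] at h
    rcases le_total u 0 with hu0 | hu0
    · exact hu0.trans (abs_nonneg _)
    · exact le_trans (by nlinarith) (le_abs_self _)
  obtain ⟨k, hk⟩ := exists_isPositive_Δ_pow_mul x
  obtain ⟨u, hu, hmax⟩ := Int.exists_greatest_of_bdd ⟨_, hbound⟩ ⟨-k, by simpa using hk⟩
  refine ⟨u, hu, fun h => ?_⟩
  have hsucc : IsPositive (Δ n ^ (-(u + 1)) * x) := by
    rw [leftDvd_iff, ← mul_assoc, ← zpow_neg_one, ← zpow_add] at h
    rwa [neg_add_rev]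
  exact absurd (hmax _ hsucc) (by omega)

lemma exists_isWeightedForm (x : BraidGroup n) :
    ∃ p : ℤ × List (BraidGroup n), IsWeightedForm p.1 p.2 x := by
  rcases isEmpty_or_nonempty (Fin (n - 1)) with hn | hn
  · have : Subsingleton (BraidGroup n) := (PresentedGroup.mk_surjective _).subsingleton
    exact ⟨(0, []), by simp, List.isChain_nil, Subsingleton.elim _ _⟩
  · obtain ⟨u, hu, hΔ⟩ := exists_isPositive_not_Δ_leftDvd x
    obtain ⟨L, hL, hchain, hprod⟩ := exists_isWeightedForm_zero hu hΔ
    refine ⟨(u, L), hL, hchain, ?_⟩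
    rw [zpow_zero, one_mul, zpow_neg, inv_mul_eq_iff_eq_mul] at hprod
    exact hprod

lemma isWeightedForm_wf (x : BraidGroup n) : IsWeightedForm (binf x) (wf x).2 x :=
  Classical.epsilon_spec (p := fun p : ℤ × List (BraidGroup n) => IsWeightedForm p.1 p.2 x)
    (exists_isWeightedForm x)

end WeightedForm

section CyclicallyWeighted

lemma isPermBraid_of_mem_wf (ha : a ∈ (wf x).2) : IsPermBraid a :=
  ((isWeightedForm_wf x).1 a ha).1

lemma mul_Δ_zpow_neg_binf (x : BraidGroup n) :
    x * Δ n ^ (-binf x) = τpow (binf x) (wf x).2.prod := by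
  nth_rw 1 [(isWeightedForm_wf x).2.2]
  simp [τpow_eq_conj]

lemma inv_mul_Δ_zpow_bsup (x : BraidGroup n) :
    x⁻¹ * Δ n ^ bsup x = (wf x).2.prod⁻¹ * Δ n ^ (wf x).2.length := by
  nth_rw 1 [(isWeightedForm_wf x).2.2]
  simp [bsup, blen, zpow_add, mul_assoc]

lemma isPositive_mul_Δ_zpow_neg_binf (x : BraidGroup n) : IsPositive (x * Δ n ^ (-binf x)) := by
  rw [mul_Δ_zpow_neg_binf]
  exact (isPositive_list_prod fun _ => isPermBraid_of_mem_wf).map_τpow _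

lemma isPositive_inv_mul_Δ_zpow_bsup (x : BraidGroup n) : IsPositive (x⁻¹ * Δ n ^ bsup x) := by
  rw [inv_mul_Δ_zpow_bsup]
  exact isPositive_compl_list_prod fun _ => isPermBraid_of_mem_wf

lemma isCW_iff : IsCW x ↔
    Disjoint (startingSet (x⁻¹ * Δ n ^ bsup x)) (startingSet (x * Δ n ^ (-binf x))) := by
  have hperm : ∀ a ∈ (wf x).2, IsPermBraid a := fun _ => isPermBraid_of_mem_wf
  have hchain : (wf x).2.IsChain IsLeftWeighted := (isWeightedForm_wf x).2.1
  obtain ⟨ρ, hρ⟩ := exists_startingSet_τpow (n := n) (binf x)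
  rw [IsCW, isLeftWeighted_iff, inv_mul_Δ_zpow_bsup, mul_Δ_zpow_neg_binf, hρ, hρ,
    startingSet_list_prod hperm hchain, bhead, btail]
  rcases eq_or_ne (wf x).2 [] with hnil | hne
  · simp [hnil]
  · rw [startingSet_compl_list_prod hperm hchain hne, List.getLast?_eq_some_getLast hne,
      Option.getD_some]

lemma leftDvd_pow_mul_Δ_zpow {s : ℤ} (hp : IsPositive (x * Δ n ^ s)) {N : ℕ} (hN : 1 ≤ N) :
    LeftDvd (x * Δ n ^ s) (x ^ N * Δ n ^ (N * s)) := by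
  induction N, hN using Nat.le_induction with
  | base => exact leftDvd_iff.2 (by simpa using isPositive_one)
  | succ N _ ih =>
    have h : x ^ (N + 1) * Δ n ^ ((N + 1 : ℕ) * s) =
        x ^ N * Δ n ^ (N * s) * τpow (-(N * s)) (x * Δ n ^ s) := by
      rw [Nat.cast_succ, add_one_mul, add_comm (N * s), zpow_add, pow_succ, τpow_eq_conj]
      simp [mul_assoc]
    exact h ▸ ih.trans (leftDvd_mul_right _ (hp.map_τpow _))

theorem cw_of_cw_power_general {N : ℕ} (hN : 1 ≤ N) (hinf : binf (x ^ N) = N * binf x)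
    (hsup : bsup (x ^ N) = N * bsup x) (hcw : IsCW (x ^ N)) : IsCW x := by
  rw [isCW_iff, hinf, hsup, ← inv_pow, ← mul_neg] at hcw
  exact isCW_iff.2 <| hcw.mono
    (startingSet_mono (leftDvd_pow_mul_Δ_zpow (isPositive_inv_mul_Δ_zpow_bsup x) hN))
    (startingSet_mono (leftDvd_pow_mul_Δ_zpow (isPositive_mul_Δ_zpow_neg_binf x) hN))

end CyclicallyWeighted

/-- if `x ∈ SSS(x)`, `inf` and `sup` are additive on powers of `x`,
and `x^N` is cyclically weighted for some `N ≥ 1`, then `x` is cyclically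
weighted. -/
theorem cw_of_cw_power (n : ℕ) (x : BraidGroup n) (hx : x ∈ SSS x)
    (hadd : ∀ i : ℕ, 1 ≤ i →
      binf (x ^ i) = (i : ℤ) * binf x ∧ bsup (x ^ i) = (i : ℤ) * bsup x)
    (N : ℕ) (hN : 1 ≤ N) (hcw : IsCW (x ^ N)) :
    IsCW x :=
  cw_of_cw_power_general hN (hadd N hN).1 (hadd N hN).2 hcw

end BraidGroup
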